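/- Let 0 < α < 2. Then there is no nonempty set K ⊆ ℝ such that for every x ∈ K one has x ≤ 1, √((1−x)/α) ∈ K, and −√((1−x)/α) ∈ K. (Since the Julia set J(T_α) of T_α(z) = 1 − αz² is nonempty, completely invariant — so that both complex preimages ±√((1−z)/α) of any point z ∈ J(T_α) lie in J(T_α) — this proves that J(T_α) is not contained in ℝ for any α ∈ (0,2).) -/

import Mathlib

/-!
If both branches `±√((1 - x) / α)` preserve `K`, then applying them at `x = -y` shows that `K ∩ -K`
is stable under `y ↦ √((1 + y) / α)`. The orbits of this map converge to its fixed point, the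
positive root of `α * s ^ 2 = 1 + s`, which exceeds `1` exactly when `α < 2`; this contradicts
`K ⊆ (-∞, 1]`. Taking the supremum `s` of `K ∩ -K` avoids the limit: stability alone gives
`1 + s ≤ α * s ^ 2`, which already forces `s > 1`.
-/

open Set
open scoped Pointwise

section SqrtStable

variable {α : ℝ} {S : Set ℝ}

theorem sSup_nonneg_of_mapsTo_sqrt (hne : S.Nonempty)
    (hS : MapsTo (fun y ↦ √((1 + y) / α)) S S) : 0 ≤ sSup S := by
  obtain ⟨y, hy⟩ := hne
  exact Real.sSup_nonneg' ⟨_, hS hy, Real.sqrt_nonneg _⟩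

theorem one_add_sSup_le_mul_sq_of_mapsTo_sqrt (hα : 0 < α) (hne : S.Nonempty) (hbdd : BddAbove S)
    (hS : MapsTo (fun y ↦ √((1 + y) / α)) S S) : 1 + sSup S ≤ α * sSup S ^ 2 := by
  have sqrt_le : ∀ y ∈ S, √((1 + y) / α) ≤ sSup S := fun y hy ↦ le_csSup hbdd (hS hy)
  have sSup_nonneg : 0 ≤ sSup S := sSup_nonneg_of_mapsTo_sqrt hne hS
  have one_add_le : ∀ y ∈ S, 1 + y ≤ α * sSup S ^ 2 := fun y hy ↦
    (div_le_iff₀' hα).mp ((Real.sqrt_le_left sSup_nonneg).mp (sqrt_le y hy))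
  have : sSup S ≤ α * sSup S ^ 2 - 1 := csSup_le hne fun y hy ↦ by linarith [one_add_le y hy]
  linarith

theorem lt_of_mul_sq_lt_one_add {s t : ℝ} (hs : 0 ≤ s) (ht : 0 ≤ t)
    (hαt : α * t ^ 2 < 1 + t) (hαs : 1 + s ≤ α * s ^ 2) : t < s := by
  by_contra! hst
  have hs_pos : 0 < s := hs.lt_of_ne (by rintro rfl; norm_num at hαs)
  have hα : 0 ≤ α := (pos_of_mul_pos_left (by linarith : 0 < α * s ^ 2) (sq_nonneg s)).le
  have : t * (1 + s) < s * (1 + t) :=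
    calc
      t * (1 + s) ≤ t * (α * s ^ 2) := by gcongr
      _ = α * s * t * s := by ring
      _ ≤ α * s * t * t := by gcongr
      _ = s * (α * t ^ 2) := by ring
      _ < s * (1 + t) := by gcongr
  linarith

theorem exists_mem_gt_of_mapsTo_sqrt {t : ℝ} (hα : 0 < α) (ht : 0 ≤ t) (hαt : α * t ^ 2 < 1 + t)
    (hne : S.Nonempty) (hS : MapsTo (fun y ↦ √((1 + y) / α)) S S) : ∃ y ∈ S, t < y := by
  by_contra! hle
  have one_add_le : 1 + sSup S ≤ α * sSup S ^ 2 :=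
    one_add_sSup_le_mul_sq_of_mapsTo_sqrt hα hne ⟨t, hle⟩ hS
  have lt_sSup : t < sSup S :=
    lt_of_mul_sq_lt_one_add (sSup_nonneg_of_mapsTo_sqrt hne hS) ht hαt one_add_le
  exact lt_sSup.not_ge (csSup_le hne hle)

end SqrtStable

/-- For `0 < α < 2` there is no nonempty set `K ⊆ ℝ` with `x ≤ 1`,
`√((1−x)/α) ∈ K` and `−√((1−x)/α) ∈ K` for every `x ∈ K`. Since the Julia set
of `T_α(z) = 1 − αz²` is nonempty and closed under both preimage branches,
this shows `J(T_α)` is not contained in `ℝ`. -/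
theorem no_real_preimage_closed_set (α : ℝ) (h0 : 0 < α) (h2 : α < 2) :
    ¬ ∃ K : Set ℝ, K.Nonempty ∧ ∀ x ∈ K,
        x ≤ 1 ∧ Real.sqrt ((1 - x) / α) ∈ K ∧ -Real.sqrt ((1 - x) / α) ∈ K := by
  rintro ⟨K, ⟨x, hx⟩, hK⟩
  have sqrt_mem : ∀ x ∈ K, √((1 - x) / α) ∈ K ∩ -K := fun x hx ↦ (hK x hx).2
  have mapsTo : MapsTo (fun y ↦ √((1 + y) / α)) (K ∩ -K) (K ∩ -K) := fun y hy ↦ by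
    simpa only [sub_neg_eq_add] using sqrt_mem (-y) hy.2
  obtain ⟨y, hy, one_lt⟩ :=
    exists_mem_gt_of_mapsTo_sqrt h0 zero_le_one (by linarith) ⟨_, sqrt_mem x hx⟩ mapsTo
  exact one_lt.not_ge (hK y hy.1).1
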